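/- Suppose ψ assigns to every utility function u : Finset α → ℝ and every z ∈ D a real number ψ(u)(z) such that: (Efficiency) Σ_{z ∈ D} ψ(u)(z) = u(D) − u(∅) for every u; (Linearity) ψ(a·u₁ + b·u₂)(z) = a·ψ(u₁)(z) + b·ψ(u₂)(z) for all reals a, b, utilities u₁, u₂, and z ∈ D; (Nullity) if u(S ∪ {z}) = u(S) for every S ⊆ D \ {z} then ψ(u)(z) = 0; (Intra-Group Uniform Mutual Dependence) whenever z ∈ D_k and z' ∈ D_ℓ with k ≤ ℓ satisfy u(S ∪ {z}) = u(S) = u(S ∪ {z'}) for every S ⊆ D \ {z, z'}, one has ψ(u)(z) = ψ(u)(z') if k = ℓ and ψ(u)(z) = 0 if k < ℓ. Then ψ(u)(z) = φ^σ(z; u, D) for every utility u and every z ∈ D. -/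

import Mathlib

open Finset

variable {α : Type*}

/-- Prefix union `U_t = D₁ ∪ ⋯ ∪ D_t` (groups are 0-indexed, so this is the union of
the groups with index `< t`). -/
def prefixUnion [DecidableEq α] (Dg : ℕ → Finset α) (t : ℕ) : Finset α :=
  (Finset.range t).biUnion Dg

/-- Asymmetric Data Shapley value (subset form) of a source `z` belonging to group `Dg t`. -/
noncomputable def ADS [DecidableEq α] (Dg : ℕ → Finset α) (v : Finset α → ℝ) (t : ℕ)
    (z : α) : ℝ :=
  (1 / (Dg t).card) *
    ∑ S ∈ ((Dg t).erase z).powerset,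
      ((((Dg t).card - 1).choose S.card : ℝ))⁻¹ *
        (v (prefixUnion Dg t ∪ S ∪ {z}) - v (prefixUnion Dg t ∪ S))

/-!
An allocation rule that is linear in the utility is determined by its values on the unanimity games
`u_R`, since every utility is the combination of the `u_R` with its Harsanyi dividends as
coefficients. On `u_R` the axioms leave no freedom: sources outside `R` are null, a member of `R`
gets nothing as soon as `R` meets a later group, so that by efficiency the members of `R` in the
last group that `R` meets share a total of `1`, in equal parts by mutual dependence.

With `U` the union of the groups before `D_t`, the ADS value of `z ∈ D_t` is the Shapley value of
`z` for the game `S ↦ v (U ∪ S)` on `D_t`. The game obtained in this way from `u_R` is `u_{R \ U}`,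
so it suffices to know the Shapley values of unanimity games.
-/

section HarsanyiDividend

variable {M : Type*} [AddCommGroup M]

/-- The Harsanyi dividend of the coalition `R` in the game `u`: the Möbius transform of `u` in the
lattice of finite sets. The sign uses `#R + #Q`, of the same parity as `#R - #Q`. -/
def harsanyiDividend (u : Finset α → M) (R : Finset α) : M :=
  ∑ Q ∈ R.powerset, (-1 : ℤ) ^ (#R + #Q) • u Q

lemma harsanyiDividend_insert [DecidableEq α] (u : Finset α → M) {R : Finset α} {x : α}
    (hx : x ∉ R) :
    harsanyiDividend u (insert x R) =
      harsanyiDividend (fun S => u (insert x S)) R - harsanyiDividend u R := by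
  simp only [harsanyiDividend]
  rw [sum_powerset_insert hx, add_comm, sub_eq_add_neg, ← sum_neg_distrib]
  congr 1 <;> refine sum_congr rfl fun Q hQ => ?_
  · rw [card_insert_of_notMem hx,
      card_insert_of_notMem (notMem_mono (mem_powerset.1 hQ) hx), ← add_assoc, add_right_comm _ 1,
      pow_succ, pow_succ, mul_neg_one, mul_neg_one, neg_neg]
  · rw [card_insert_of_notMem hx, add_right_comm, pow_succ, mul_neg_one, neg_smul]

lemma sum_harsanyiDividend (u : Finset α → M) (S : Finset α) :
    ∑ R ∈ S.powerset, harsanyiDividend u R = u S := by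
  classical
  induction S using Finset.induction_on generalizing u with
  | empty => simp [harsanyiDividend]
  | insert x S hx ih =>
    rw [sum_powerset_insert hx, ← sum_add_distrib]
    calc ∑ R ∈ S.powerset, (harsanyiDividend u R + harsanyiDividend u (insert x R))
        = ∑ R ∈ S.powerset, harsanyiDividend (fun Q => u (insert x Q)) R :=
          sum_congr rfl fun R hR => by
            rw [harsanyiDividend_insert u (notMem_mono (mem_powerset.1 hR) hx),
              add_sub_cancel]
      _ = u (insert x S) := ih _

end HarsanyiDividend

section UnanimityGames

variable {𝕜 M : Type*} [DecidableEq α]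

/-- The unanimity game of the coalition `R`. -/
def unanimity [Zero 𝕜] [One 𝕜] (R S : Finset α) : 𝕜 := if R ⊆ S then 1 else 0

lemma unanimity_eq_one [Zero 𝕜] [One 𝕜] {R S : Finset α} (h : R ⊆ S) :
    unanimity R S = (1 : 𝕜) :=
  if_pos h

lemma unanimity_eq_zero_of_notMem [Zero 𝕜] [One 𝕜] {R S : Finset α} {x : α} (hxR : x ∈ R)
    (hxS : x ∉ S) : unanimity R S = (0 : 𝕜) :=
  if_neg fun h => hxS (h hxR)

lemma unanimity_union_singleton_of_notMem [Zero 𝕜] [One 𝕜] {R : Finset α} {z : α} (hz : z ∉ R)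
    (S : Finset α) : unanimity R (S ∪ {z}) = (unanimity R S : 𝕜) := by
  simp only [unanimity, union_singleton, subset_insert_iff_of_notMem hz]

lemma unanimity_union [Zero 𝕜] [One 𝕜] (R U S : Finset α) :
    unanimity R (U ∪ S) = (unanimity (R \ U) S : 𝕜) :=
  if_congr sdiff_le_iff.symm rfl rfl

lemma sum_harsanyiDividend_mul_unanimity [Ring 𝕜] (u : Finset α → 𝕜) {D S : Finset α}
    (hS : S ⊆ D) : ∑ R ∈ D.powerset, harsanyiDividend u R * unanimity R S = u S := by
  have hfilter : D.powerset.filter (· ⊆ S) = S.powerset := by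
    ext R
    simpa using fun h : R ⊆ S => h.trans hS
  simp only [unanimity, mul_ite, mul_one, mul_zero]
  rw [← sum_filter, hfilter, sum_harsanyiDividend]

lemma linearMap_ext_of_unanimity [Ring 𝕜] [AddCommGroup M] [Module 𝕜 M]
    {F G : (Finset α → 𝕜) →ₗ[𝕜] M} (D : Finset α)
    (hlocal : ∀ w : Finset α → 𝕜, (∀ S ⊆ D, w S = 0) → F w = G w)
    (hunan : ∀ R ⊆ D, F (unanimity R) = G (unanimity R)) : F = G := by
  refine LinearMap.ext fun u => ?_
  let p : Finset α → 𝕜 := ∑ R ∈ D.powerset, harsanyiDividend u R • unanimity R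
  have hp : F p = G p := by
    simp only [p, map_sum, map_smul]
    exact sum_congr rfl fun R hR => by rw [hunan R (mem_powerset.1 hR)]
  have hup : F (u - p) = G (u - p) := hlocal _ fun S hS => by
    simp only [p, Pi.sub_apply, Finset.sum_apply, Pi.smul_apply, smul_eq_mul,
      sum_harsanyiDividend_mul_unanimity u hS, sub_self]
  rw [← sub_add_cancel u p, map_add, map_add, hup, hp]

end UnanimityGames

section ShapleyValue

variable {𝕜 : Type*} [Field 𝕜]

lemma inv_choose_add_inv_choose_succ [CharZero 𝕜] {b s : ℕ} (h : s ≤ b) :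
    ((b : 𝕜) + 2)⁻¹ * (((b + 1).choose s : 𝕜)⁻¹ + ((b + 1).choose (s + 1) : 𝕜)⁻¹) =
      ((b : 𝕜) + 1)⁻¹ * (b.choose s : 𝕜)⁻¹ := by
  obtain ⟨d, rfl⟩ := Nat.exists_eq_add_of_le h
  have hchoose : ((s + d).choose s : 𝕜) ≠ 0 := Nat.cast_ne_zero.2 (Nat.choose_pos h).ne'
  have hd : (d : 𝕜) + 1 ≠ 0 := d.cast_add_one_ne_zero
  have hs : (s : 𝕜) + 1 ≠ 0 := s.cast_add_one_ne_zero
  have hsd₁ : (s : 𝕜) + d + 1 ≠ 0 := mod_cast (s + d).succ_ne_zero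
  have hsd₂ : (s : 𝕜) + d + 2 ≠ 0 := mod_cast (s + d + 1).succ_ne_zero
  have hleft : ((s + d + 1).choose s : 𝕜) = (s + d).choose s * (s + d + 1) / (d + 1) := by
    rw [eq_div_iff hd]
    have hmul := Nat.choose_mul_succ_eq (s + d) s
    rw [add_assoc s d 1, Nat.add_sub_cancel_left, ← add_assoc] at hmul
    exact_mod_cast hmul.symm
  have hright : ((s + d + 1).choose (s + 1) : 𝕜) =
      (s + d + 1) * (s + d).choose s / (s + 1) := by
    rw [eq_div_iff hs]
    exact_mod_cast (Nat.add_one_mul_choose_eq (s + d) s).symm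
  rw [hleft, hright]
  push_cast
  field_simp
  ring

variable [DecidableEq α]

lemma sum_Icc_inv_choose_card [CharZero 𝕜] {A B : Finset α} (h : A ⊆ B) :
    ((#B : 𝕜) + 1)⁻¹ * ∑ S ∈ Icc A B, ((#B).choose #S : 𝕜)⁻¹ = ((#A : 𝕜) + 1)⁻¹ := by
  obtain ⟨C, rfl⟩ : ∃ C, B = A ∪ C := ⟨B, (union_eq_right.2 h).symm⟩
  clear h
  induction C using Finset.induction_on with
  | empty => simp
  | insert x C _ ih =>
    rw [union_insert]
    by_cases hx : x ∈ A ∪ C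
    · rwa [insert_eq_of_mem hx]
    have hxA : x ∉ A := notMem_mono subset_union_left hx
    rw [← ih, Icc_eq_filter_powerset, Icc_eq_filter_powerset, sum_filter, sum_filter,
      sum_powerset_insert hx, ← sum_add_distrib, mul_sum, mul_sum, card_insert_of_notMem hx]
    refine sum_congr rfl fun S hS => ?_
    rw [mem_powerset] at hS
    simp only [subset_insert_iff_of_notMem hxA, card_insert_of_notMem (notMem_mono hS hx)]
    split_ifs
    · rw [← inv_choose_add_inv_choose_succ (card_le_card hS)]
      push_cast
      ring
    · simp only [add_zero, mul_zero]

/-- The Shapley value of the player `z` in games on the player set `G`, as a linear functional of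
the game. A game is defined on all finite sets; only its values on subsets of `G` matter. -/
noncomputable def shapleyValue (G : Finset α) (z : α) : (Finset α → 𝕜) →ₗ[𝕜] 𝕜 where
  toFun v := (#G : 𝕜)⁻¹ * ∑ S ∈ (G.erase z).powerset,
    ((#G - 1).choose #S : 𝕜)⁻¹ * (v (S ∪ {z}) - v S)
  map_add' v w := by
    simp only [Pi.add_apply, add_sub_add_comm, mul_add, sum_add_distrib]
  map_smul' c v := by
    simp only [Pi.smul_apply, smul_eq_mul, ← mul_sub, mul_left_comm _ c, ← mul_sum,
      RingHom.id_apply]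

lemma shapleyValue_apply (G : Finset α) (z : α) (v : Finset α → 𝕜) :
    shapleyValue G z v = (#G : 𝕜)⁻¹ * ∑ S ∈ (G.erase z).powerset,
      ((#G - 1).choose #S : 𝕜)⁻¹ * (v (S ∪ {z}) - v S) :=
  rfl

lemma shapleyValue_eq_zero_of_marginal {G : Finset α} {z : α} {v : Finset α → 𝕜}
    (h : ∀ S ⊆ G.erase z, v (S ∪ {z}) = v S) : shapleyValue G z v = 0 := by
  rw [shapleyValue_apply, sum_eq_zero, mul_zero]
  intro S hS
  rw [h S (mem_powerset.1 hS), sub_self, mul_zero]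

lemma shapleyValue_unanimity_of_subset [CharZero 𝕜] {G Q : Finset α} {z : α} (hzQ : z ∈ Q)
    (hQ : Q ⊆ G) : shapleyValue G z (unanimity Q) = (#Q : 𝕜)⁻¹ := by
  have hmarginal : ∀ S ∈ (G.erase z).powerset,
      unanimity Q (S ∪ {z}) - unanimity Q S = if Q.erase z ⊆ S then (1 : 𝕜) else 0 := by
    intro S hS
    have hzS : z ∉ S := notMem_mono (mem_powerset.1 hS) (notMem_erase z G)
    rw [unanimity_eq_zero_of_notMem hzQ hzS, sub_zero]
    simp only [unanimity, union_singleton, subset_insert_iff]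
  calc shapleyValue G z (unanimity Q)
      = (#G : 𝕜)⁻¹ * ∑ S ∈ Icc (Q.erase z) (G.erase z), ((#(G.erase z)).choose #S : 𝕜)⁻¹ := by
        rw [shapleyValue_apply, sum_congr rfl fun S hS => by rw [hmarginal S hS],
          Icc_eq_filter_powerset, sum_filter, card_erase_of_mem (hQ hzQ)]
        simp only [mul_ite, mul_one, mul_zero]
    _ = (#Q : 𝕜)⁻¹ := by
        rw [← card_erase_add_one (hQ hzQ), ← card_erase_add_one hzQ, Nat.cast_succ, Nat.cast_succ,
          sum_Icc_inv_choose_card (erase_subset_erase z hQ)]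

lemma shapleyValue_unanimity [CharZero 𝕜] {G : Finset α} {z : α} (hz : z ∈ G) (Q : Finset α) :
    shapleyValue G z (unanimity Q) = if z ∈ Q ∧ Q ⊆ G then (#Q : 𝕜)⁻¹ else 0 := by
  split_ifs with h
  · exact shapleyValue_unanimity_of_subset h.1 h.2
  refine shapleyValue_eq_zero_of_marginal fun S hS => ?_
  by_cases hzQ : z ∈ Q
  · obtain ⟨y, hyQ, hyG⟩ := not_subset.1 fun hQ => h ⟨hzQ, hQ⟩
    have hyS : y ∉ S := notMem_mono (hS.trans (erase_subset z G)) hyG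
    have hyz : y ≠ z := fun hyz => hyG (hyz ▸ hz)
    rw [unanimity_eq_zero_of_notMem hyQ hyS, unanimity_eq_zero_of_notMem hyQ (by simp [hyS, hyz])]
  · exact unanimity_union_singleton_of_notMem hzQ S

end ShapleyValue

section PrefixUnion

variable [DecidableEq α] {Dg : ℕ → Finset α} {T t : ℕ} {x : α}

lemma mem_prefixUnion : x ∈ prefixUnion Dg t ↔ ∃ k < t, x ∈ Dg k := by
  simp only [prefixUnion, mem_biUnion, mem_range]

lemma subset_prefixUnion (ht : t < T) : Dg t ⊆ prefixUnion Dg T :=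
  fun _ hx => mem_prefixUnion.2 ⟨t, ht, hx⟩

lemma prefixUnion_mono : Monotone (prefixUnion Dg) :=
  fun _ _ h => biUnion_subset_biUnion_of_subset_left Dg (range_mono h)

lemma notMem_prefixUnion (hdisj : (Set.Iio T).PairwiseDisjoint Dg) (ht : t < T) (hx : x ∈ Dg t) :
    x ∉ prefixUnion Dg t := fun hxU =>
  have ⟨_, hk, hxk⟩ := mem_prefixUnion.1 hxU
  disjoint_left.1 (hdisj (hk.trans ht) ht hk.ne) hxk hx

end PrefixUnion

section ADSValue

variable {𝕜 : Type*} [Field 𝕜] [DecidableEq α] {Dg : ℕ → Finset α} {t : ℕ} {z : α}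

/-- The ADS value of `z` in the group `Dg t`, as a linear functional of the utility: the Shapley
value in the game that starts from the union of the earlier groups. Unlike `ADS`, it allows
utilities with values in any field. -/
noncomputable def adsValue (Dg : ℕ → Finset α) (t : ℕ) (z : α) : (Finset α → 𝕜) →ₗ[𝕜] 𝕜 :=
  shapleyValue (Dg t) z ∘ₗ LinearMap.funLeft 𝕜 𝕜 (prefixUnion Dg t ∪ ·)

lemma adsValue_eq_ADS (Dg : ℕ → Finset α) (t : ℕ) (z : α) (v : Finset α → ℝ) :
    adsValue Dg t z v = ADS Dg v t z := by
  simp only [adsValue, LinearMap.comp_apply, shapleyValue_apply, LinearMap.funLeft_apply, ADS,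
    one_div, union_assoc]

lemma adsValue_unanimity [CharZero 𝕜] (hz : z ∈ Dg t) (R : Finset α) :
    adsValue Dg t z (unanimity R) =
      if z ∈ R \ prefixUnion Dg t ∧ R \ prefixUnion Dg t ⊆ Dg t
      then (#(R \ prefixUnion Dg t) : 𝕜)⁻¹ else 0 := by
  rw [← shapleyValue_unanimity hz]
  exact congrArg (shapleyValue (Dg t) z) (funext (unanimity_union R _))

lemma adsValue_eq_zero_of_forall_subset (hz : z ∈ Dg t) {w : Finset α → 𝕜}
    (hw : ∀ S ⊆ prefixUnion Dg (t + 1), w S = 0) : adsValue Dg t z w = 0 := by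
  have hsub : ∀ S ⊆ Dg t, w (prefixUnion Dg t ∪ S) = 0 := fun S hS =>
    hw _ (union_subset (prefixUnion_mono t.le_succ) (hS.trans (subset_prefixUnion t.lt_succ_self)))
  refine shapleyValue_eq_zero_of_marginal fun S hS => ?_
  have hSt : S ⊆ Dg t := hS.trans (erase_subset z _)
  exact (hsub _ (union_subset hSt (singleton_subset_iff.2 hz))).trans (hsub S hSt).symm

end ADSValue

section Axioms

variable {𝕜 : Type*} [DecidableEq α]

/-- Efficiency of the allocation rule `ψ` for the sources `D`. -/
def Efficiency [AddCommGroup 𝕜] (D : Finset α) (ψ : (Finset α → 𝕜) → α → 𝕜) : Prop :=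
  ∀ u : Finset α → 𝕜, ∑ z ∈ D, ψ u z = u D - u ∅

/-- Linearity of the allocation rule `ψ` in the utility, for the sources `D`. -/
def Linearity [Semiring 𝕜] (D : Finset α) (ψ : (Finset α → 𝕜) → α → 𝕜) : Prop :=
  ∀ (a b : 𝕜) (u₁ u₂ : Finset α → 𝕜), ∀ z ∈ D,
    ψ (fun S => a * u₁ S + b * u₂ S) z = a * ψ u₁ z + b * ψ u₂ z

/-- Nullity of the allocation rule `ψ` for the sources `D`: a source that never changes the utility
is allocated nothing. -/
def Nullity [Zero 𝕜] (D : Finset α) (ψ : (Finset α → 𝕜) → α → 𝕜) : Prop :=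
  ∀ u : Finset α → 𝕜, ∀ z ∈ D, (∀ S ⊆ D \ {z}, u (S ∪ {z}) = u S) → ψ u z = 0

/-- Intra-Group Uniform Mutual Dependence of the allocation rule `ψ` for the sources in the groups
`Dg k`, `k < T`: of two sources that only change the utility jointly, the one in the earlier group
is allocated nothing, and they are treated equally if their groups coincide. -/
def IntraGroupMutualDependence [Zero 𝕜] (Dg : ℕ → Finset α) (T : ℕ)
    (ψ : (Finset α → 𝕜) → α → 𝕜) : Prop :=
  ∀ (u : Finset α → 𝕜) (k l : ℕ), k < T → l < T → k ≤ l → ∀ z ∈ Dg k, ∀ z' ∈ Dg l,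
    (∀ S ⊆ prefixUnion Dg T \ {z, z'}, u (S ∪ {z}) = u S ∧ u (S ∪ {z'}) = u S) →
    (k = l → ψ u z = ψ u z') ∧ (k < l → ψ u z = 0)

variable {D R : Finset α} {Dg : ℕ → Finset α} {T t : ℕ} {z : α} {ψ : (Finset α → 𝕜) → α → 𝕜}

/-- The allocation to a fixed source, as a linear functional of the utility. -/
def Linearity.toLinearMap [Semiring 𝕜] (hlin : Linearity D ψ) (hz : z ∈ D) :
    (Finset α → 𝕜) →ₗ[𝕜] 𝕜 where
  toFun u := ψ u z
  map_add' u₁ u₂ := by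
    have h := hlin 1 1 u₁ u₂ z hz
    simp only [one_mul] at h
    exact h
  map_smul' a u := by
    have h := hlin a 0 u u z hz
    simp only [zero_mul, add_zero] at h
    exact h

lemma Nullity.eq_zero_of_forall_subset [Zero 𝕜] (hnull : Nullity D ψ) (hz : z ∈ D)
    {w : Finset α → 𝕜} (hw : ∀ S ⊆ D, w S = 0) : ψ w z = 0 :=
  hnull w z hz fun S hS => by
    have hSD : S ⊆ D := hS.trans sdiff_subset
    rw [hw S hSD, hw _ (union_subset hSD (singleton_subset_iff.2 hz))]

lemma Nullity.unanimity_of_notMem [Zero 𝕜] [One 𝕜] (hnull : Nullity D ψ) (hz : z ∈ D)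
    (hzR : z ∉ R) : ψ (unanimity R) z = 0 :=
  hnull _ z hz fun S _ => unanimity_union_singleton_of_notMem hzR S

lemma Efficiency.sum_unanimity [AddCommGroupWithOne 𝕜] (heff : Efficiency D ψ)
    (hne : R.Nonempty) (hR : R ⊆ D) :
    ∑ x ∈ D, ψ (unanimity R) x = 1 := by
  obtain ⟨x, hx⟩ := hne
  rw [heff, unanimity_eq_one hR, unanimity_eq_zero_of_notMem hx (notMem_empty x), sub_zero]

lemma unanimity_union_singleton_eq_of_pair [Zero 𝕜] [One 𝕜] {x y : α} (hx : x ∈ R) (hy : y ∈ R)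
    (hxy : x ≠ y) {S : Finset α} (hS : S ⊆ D \ {x, y}) :
    unanimity R (S ∪ {x}) = (unanimity R S : 𝕜) ∧ unanimity R (S ∪ {y}) = (unanimity R S : 𝕜) := by
  have hxS : x ∉ S := fun h => by simpa using hS h
  have hyS : y ∉ S := fun h => by simpa using hS h
  rw [unanimity_eq_zero_of_notMem hx hxS,
    unanimity_eq_zero_of_notMem hy (S := S ∪ {x}) (by simp [hyS, hxy.symm]),
    unanimity_eq_zero_of_notMem hx (S := S ∪ {y}) (by simp [hxS, hxy])]
  exact ⟨rfl, rfl⟩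

namespace IntraGroupMutualDependence

variable {x y : α}

lemma unanimity_eq_zero_of_lt [Zero 𝕜] [One 𝕜] (hmutual : IntraGroupMutualDependence Dg T ψ)
    (hdisj : (Set.Iio T).PairwiseDisjoint Dg) {k l : ℕ} (hkl : k < l) (hl : l < T)
    (hx : x ∈ Dg k) (hxR : x ∈ R) (hy : y ∈ Dg l) (hyR : y ∈ R) : ψ (unanimity R) x = 0 :=
  have hxy : x ≠ y := disjoint_iff_ne.1 (hdisj (hkl.trans hl) hl hkl.ne) x hx y hy
  (hmutual _ k l (hkl.trans hl) hl hkl.le x hx y hy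
    fun _ => unanimity_union_singleton_eq_of_pair hxR hyR hxy).2 hkl

lemma unanimity_eq_of_mem_group [Zero 𝕜] [One 𝕜] (hmutual : IntraGroupMutualDependence Dg T ψ)
    (ht : t < T) (hx : x ∈ Dg t) (hxR : x ∈ R) (hy : y ∈ Dg t) (hyR : y ∈ R) :
    ψ (unanimity R) x = ψ (unanimity R) y := by
  obtain rfl | hxy := eq_or_ne x y
  · rfl
  · exact (hmutual _ t t ht ht le_rfl x hx y hy
      fun _ => unanimity_union_singleton_eq_of_pair hxR hyR hxy).1 rfl

end IntraGroupMutualDependence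

lemma allocation_unanimity_eq_zero [Zero 𝕜] [One 𝕜] (hdisj : (Set.Iio T).PairwiseDisjoint Dg)
    (hnull : Nullity (prefixUnion Dg T) ψ) (hmutual : IntraGroupMutualDependence Dg T ψ)
    (hR : R ⊆ prefixUnion Dg T) (ht : t < T) (hz : z ∈ Dg t)
    (h : ¬(z ∈ R ∧ R \ prefixUnion Dg t ⊆ Dg t)) : ψ (unanimity R) z = 0 := by
  by_cases hzR : z ∈ R
  · obtain ⟨y, hy, hyt⟩ := not_subset.1 fun hsub => h ⟨hzR, hsub⟩
    obtain ⟨hyR, hyU⟩ := mem_sdiff.1 hy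
    obtain ⟨l, hl, hyl⟩ := mem_prefixUnion.1 (hR hyR)
    have htl : t < l := by
      by_contra! hlt
      obtain hlt | rfl := hlt.lt_or_eq
      · exact hyU (mem_prefixUnion.2 ⟨l, hlt, hyl⟩)
      · exact hyt hyl
    exact hmutual.unanimity_eq_zero_of_lt hdisj htl hl hz hzR hyl hyR
  · exact hnull.unanimity_of_notMem (subset_prefixUnion ht hz) hzR

lemma sum_allocation_unanimity_last_group [AddCommGroupWithOne 𝕜]
    (hdisj : (Set.Iio T).PairwiseDisjoint Dg) (heff : Efficiency (prefixUnion Dg T) ψ)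
    (hnull : Nullity (prefixUnion Dg T) ψ) (hmutual : IntraGroupMutualDependence Dg T ψ)
    (hR : R ⊆ prefixUnion Dg T) (ht : t < T) (hz : z ∈ Dg t) (hzR : z ∈ R) :
    ∑ x ∈ R \ prefixUnion Dg t, ψ (unanimity R) x = 1 := by
  rw [← heff.sum_unanimity ⟨z, hzR⟩ hR]
  refine sum_subset (sdiff_subset.trans hR) fun x hxD hx => ?_
  by_cases hxR : x ∈ R
  · have hxU : x ∈ prefixUnion Dg t := by simpa [hxR] using hx
    obtain ⟨k, hk, hxk⟩ := mem_prefixUnion.1 hxU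
    exact hmutual.unanimity_eq_zero_of_lt hdisj hk ht hxk hxR hz hzR
  · exact hnull.unanimity_of_notMem hxD hxR

lemma allocation_unanimity [DivisionRing 𝕜] (hdisj : (Set.Iio T).PairwiseDisjoint Dg)
    (heff : Efficiency (prefixUnion Dg T) ψ) (hnull : Nullity (prefixUnion Dg T) ψ)
    (hmutual : IntraGroupMutualDependence Dg T ψ) (hR : R ⊆ prefixUnion Dg T) (ht : t < T)
    (hz : z ∈ Dg t) :
    ψ (unanimity R) z =
      if z ∈ R \ prefixUnion Dg t ∧ R \ prefixUnion Dg t ⊆ Dg t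
      then (#(R \ prefixUnion Dg t) : 𝕜)⁻¹ else 0 := by
  split_ifs with h
  · obtain ⟨hzQ, hQ⟩ := h
    have hzR : z ∈ R := (mem_sdiff.1 hzQ).1
    have hconst : ∀ x ∈ R \ prefixUnion Dg t, ψ (unanimity R) x = ψ (unanimity R) z :=
      fun x hx => hmutual.unanimity_eq_of_mem_group ht (hQ hx) (mem_sdiff.1 hx).1 hz hzR
    have hsum := sum_allocation_unanimity_last_group hdisj heff hnull hmutual hR ht hz hzR
    rw [sum_congr rfl hconst, sum_const, nsmul_eq_mul] at hsum
    exact eq_inv_of_mul_eq_one_right hsum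
  · refine allocation_unanimity_eq_zero hdisj hnull hmutual hR ht hz fun ⟨hzR, hQ⟩ => h ⟨?_, hQ⟩
    exact mem_sdiff.2 ⟨hzR, notMem_prefixUnion hdisj ht hz⟩

theorem ads_axiomatic_uniqueness_general [Field 𝕜] [CharZero 𝕜]
    (hdisj : (Set.Iio T).PairwiseDisjoint Dg) (heff : Efficiency (prefixUnion Dg T) ψ)
    (hlin : Linearity (prefixUnion Dg T) ψ) (hnull : Nullity (prefixUnion Dg T) ψ)
    (hmutual : IntraGroupMutualDependence Dg T ψ) (u : Finset α → 𝕜) (ht : t < T)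
    (hz : z ∈ Dg t) : ψ u z = adsValue Dg t z u := by
  have hzD : z ∈ prefixUnion Dg T := subset_prefixUnion ht hz
  suffices hfunctional : hlin.toLinearMap hzD = adsValue Dg t z from
    LinearMap.congr_fun hfunctional u
  refine linearMap_ext_of_unanimity (prefixUnion Dg T) (fun w hw => ?_) fun R hR => ?_
  · have hw' : ∀ S ⊆ prefixUnion Dg (t + 1), w S = 0 := fun S hS =>
      hw S (hS.trans (prefixUnion_mono ht))
    exact (hnull.eq_zero_of_forall_subset hzD hw).trans
      (adsValue_eq_zero_of_forall_subset hz hw').symm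
  · exact (allocation_unanimity hdisj heff hnull hmutual hR ht hz).trans
      (adsValue_unanimity hz R).symm

end Axioms

/-- Axiomatic uniqueness: any allocation rule `ψ` satisfying Efficiency, Linearity, Nullity,
and Intra-Group Uniform Mutual Dependence coincides with the Asymmetric Data Shapley value. -/
theorem ads_axiomatic_uniqueness [DecidableEq α]
    (T : ℕ) (hT : 1 ≤ T) (Dg : ℕ → Finset α)
    (hdisj : ∀ i < T, ∀ j < T, i ≠ j → Disjoint (Dg i) (Dg j))
    (hne : ∀ j < T, (Dg j).Nonempty)
    (D : Finset α) (hD : D = (Finset.range T).biUnion Dg)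
    (ψ : (Finset α → ℝ) → α → ℝ)
    (heff : ∀ u : Finset α → ℝ, ∑ z ∈ D, ψ u z = u D - u ∅)
    (hlin : ∀ (a b : ℝ) (u₁ u₂ : Finset α → ℝ), ∀ z ∈ D,
      ψ (fun S => a * u₁ S + b * u₂ S) z = a * ψ u₁ z + b * ψ u₂ z)
    (hnull : ∀ (u : Finset α → ℝ), ∀ z ∈ D,
      (∀ S ⊆ D \ {z}, u (S ∪ {z}) = u S) → ψ u z = 0)
    (hmutual : ∀ (u : Finset α → ℝ) (k l : ℕ), k < T → l < T → k ≤ l →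
      ∀ z ∈ Dg k, ∀ z' ∈ Dg l,
        (∀ S ⊆ D \ {z, z'}, u (S ∪ {z}) = u S ∧ u (S ∪ {z'}) = u S) →
        (k = l → ψ u z = ψ u z') ∧ (k < l → ψ u z = 0)) :
    ∀ (u : Finset α → ℝ) (t : ℕ), t < T → ∀ z ∈ Dg t, ψ u z = ADS Dg u t z := by
  subst hD
  exact fun u t ht z hz => (ads_axiomatic_uniqueness_general (fun i hi j hj => hdisj i hi j hj)
    heff hlin hnull hmutual u ht hz).trans (adsValue_eq_ADS Dg t z u)
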